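/- Let g : ℝ³×ℝ → ℝ³ be a C^∞ bifurcation problem in three state variables commuting with the action of Z2×Z2×Z2. Then there exist C^∞ functions p, q, r : ℝ³×ℝ → ℝ such that g(x,y,z,λ) = (p(x²,y²,z²,λ)·x, q(x²,y²,z²,λ)·y, r(x²,y²,z²,λ)·z) for all (x,y,z,λ) ∈ ℝ³×ℝ, and moreover p(0,0,0,0) = q(0,0,0,0) = r(0,0,0,0) = 0. -/

import Mathlib

/-- A real-valued function of three state variables and one bifurcation
parameter is smooth if the associated map `ℝ × ℝ × ℝ × ℝ → ℝ` is `C^∞`. -/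
def Smooth4 (f : ℝ → ℝ → ℝ → ℝ → ℝ) : Prop :=
  ContDiff ℝ (⊤ : ℕ∞) (fun v : ℝ × ℝ × ℝ × ℝ => f v.1 v.2.1 v.2.2.1 v.2.2.2)

/-- An `ℝ³`-valued function of three state variables and one bifurcation
parameter is smooth if the associated map `ℝ × ℝ × ℝ × ℝ → ℝ × ℝ × ℝ` is `C^∞`. -/
def Smooth4V (g : ℝ → ℝ → ℝ → ℝ → ℝ × ℝ × ℝ) : Prop :=
  ContDiff ℝ (⊤ : ℕ∞) (fun v : ℝ × ℝ × ℝ × ℝ => g v.1 v.2.1 v.2.2.1 v.2.2.2)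

/-!
The cosine is a smooth function of the square: `cos x = c (x ^ 2)`, where `c` can be taken of
temperate growth. Let `f (x, w)` be smooth, compactly supported and even in each `x i`. Averaging
its Fourier inversion formula over all sign changes of `x` leaves
`f (x, w) = ∫ a (ξ, η) (∏ i, cos (x i * ξ i)) exp (i ⟨η, w⟩)` with `a` a Schwartz function, and
replacing each cosine by `c (x i ^ 2 * ξ i ^ 2)` exhibits `f` as a smooth function of
`(x ^ 2, w)`. The condition on `h` that `f (x, w) = h (x ^ 2, w)` for all `x` is pointwise convex in
the values of `h`, so a partition of unity removes the compact support. The `i`-th component `g i`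
of an equivariant map is odd in `x i` and even in the other coordinates, so `x i * g i` is a smooth
function of the squares that vanishes where `x i = 0`; by Hadamard's lemma it is `x i ^ 2` times a
smooth function of the squares.
-/

open Filter Topology MeasureTheory Function
open scoped ContDiff SchwartzMap

section ParametricIntegral

variable {E W F : Type*} [NormedAddCommGroup E] [NormedSpace ℝ E] [NormedAddCommGroup W]
  [NormedSpace ℝ W] [NormedAddCommGroup F] [NormedSpace ℝ F]

set_option maxSynthPendingDepth 3 in
theorem contDiff_integral_of_dominated {α : Type*} [MeasurableSpace α] {μ : Measure α}
    {K : E → α → F} {n : ℕ∞} (hK : ∀ a, ContDiff ℝ n (K · a))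
    (hmeas : ∀ k : ℕ, k ≤ n → ∀ v, AEStronglyMeasurable (fun a => iteratedFDeriv ℝ k (K · a) v) μ)
    (hdom : ∀ k : ℕ, k ≤ n → ∀ v, ∃ s ∈ 𝓝 v, ∃ b : α → ℝ, Integrable b μ ∧
      ∀ᵐ a ∂μ, ∀ v' ∈ s, ‖iteratedFDeriv ℝ k (K · a) v'‖ ≤ b a) :
    ContDiff ℝ n (fun v => ∫ a, K v a ∂μ) := by
  have hint : ∀ k : ℕ, k ≤ n → ∀ v, Integrable (fun a => iteratedFDeriv ℝ k (K · a) v) μ := by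
    intro k hk v
    obtain ⟨s, hs, b, hb, hle⟩ := hdom k hk v
    exact hb.mono' (hmeas k hk v) (hle.mono fun a ha => ha v (mem_of_mem_nhds hs))
  have htaylor : HasFTaylorSeriesUpTo n (fun v => ∫ a, K v a ∂μ)
      (fun v k => ∫ a, iteratedFDeriv ℝ k (K · a) v ∂μ) := by
    refine ⟨fun v => ?_, fun k hk v => ?_, fun k hk => ?_⟩
    · simpa [iteratedFDeriv_zero_apply] using
        ContinuousMultilinearMap.integral_apply (hint 0 bot_le v) 0
    · have hk : k < n := by exact_mod_cast hk
      have hk' : ((k + 1 : ℕ) : ℕ∞) ≤ n := by exact_mod_cast Order.add_one_le_of_lt hk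
      let curry : (E [×(k + 1)]→L[ℝ] F) ≃L[ℝ] (E →L[ℝ] E [×k]→L[ℝ] F) :=
        (continuousMultilinearCurryLeftEquiv ℝ (fun _ : Fin (k + 1) => E) F).toContinuousLinearEquiv
      have hderiv : ∀ a v, HasFDerivAt (iteratedFDeriv ℝ k (K · a))
          (curry (iteratedFDeriv ℝ (k + 1) (K · a) v)) v := fun a =>
        (contDiff_iff_ftaylorSeries.1 (hK a)).fderiv k (by exact_mod_cast hk)
      have hcurry : (∫ a, iteratedFDeriv ℝ (k + 1) (K · a) v ∂μ).curryLeft =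
          ∫ a, curry (iteratedFDeriv ℝ (k + 1) (K · a) v) ∂μ :=
        (ContinuousLinearEquiv.integral_comp_comm curry _).symm
      obtain ⟨s, hs, b, hb, hle⟩ := hdom (k + 1) hk' v
      rw [hcurry]
      refine hasFDerivAt_integral_of_dominated_of_fderiv_le hs
        (.of_forall (hmeas k hk.le)) (hint k hk.le v) ?_ ?_ hb (.of_forall fun a v _ => hderiv a v)
      · exact curry.continuous.comp_aestronglyMeasurable (hmeas (k + 1) hk' v)
      · exact hle.mono fun a ha v' hv' =>
          (ContinuousMultilinearMap.curryLeft_norm _).trans_le (ha v' hv')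
    · have hk : k ≤ n := by exact_mod_cast hk
      refine continuous_iff_continuousAt.2 fun v => ?_
      obtain ⟨s, hs, b, hb, hle⟩ := hdom k hk v
      refine continuousAt_of_dominated (.of_forall (hmeas k hk)) ?_ hb (.of_forall fun a => ?_)
      · filter_upwards [hs] with v' hv' using hle.mono fun a ha => ha v' hv'
      · exact ((hK a).continuous_iteratedFDeriv (by exact_mod_cast hk)).continuousAt
  exact htaylor.contDiff

theorem iteratedFDeriv_prodMk_right {K : E × W → F} {n : WithTop ℕ∞} (hK : ContDiff ℝ n K) {k : ℕ}
    (hk : k ≤ n) (v : E) (w : W) :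
    iteratedFDeriv ℝ k (fun v => K (v, w)) v =
      (iteratedFDeriv ℝ k K (v, w)).compContinuousLinearMap
        fun _ => ContinuousLinearMap.inl ℝ E W := by
  have htranslate : (fun v => K (v, w)) =
      (fun p => K (p + (0, w))) ∘ ContinuousLinearMap.inl ℝ E W := by
    ext v; simp
  rw [htranslate, ContinuousLinearMap.iteratedFDeriv_comp_right _ (by fun_prop) v hk,
    iteratedFDeriv_comp_add_right]
  simp

theorem norm_iteratedFDeriv_prodMk_right_le {K : E × W → F} {n : WithTop ℕ∞}
    (hK : ContDiff ℝ n K) {k : ℕ} (hk : k ≤ n) (v : E) (w : W) :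
    ‖iteratedFDeriv ℝ k (fun v => K (v, w)) v‖ ≤ ‖iteratedFDeriv ℝ k K (v, w)‖ := by
  rw [iteratedFDeriv_prodMk_right hK hk]
  refine (ContinuousMultilinearMap.norm_compContinuousLinearMap_le _ _).trans ?_
  refine mul_le_of_le_one_right (norm_nonneg _) (Finset.prod_le_one (fun _ _ => norm_nonneg _) ?_)
  exact fun _ _ => ContinuousLinearMap.norm_inl_le_one ℝ E W

theorem continuous_iteratedFDeriv_prodMk_right {K : E × W → F} {n : WithTop ℕ∞}
    (hK : ContDiff ℝ n K) {k : ℕ} (hk : k ≤ n) (v : E) :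
    Continuous fun w => iteratedFDeriv ℝ k (fun v => K (v, w)) v := by
  simp_rw [iteratedFDeriv_prodMk_right hK hk]
  exact (ContinuousMultilinearMap.compContinuousLinearMapL _).continuous.comp
    ((hK.continuous_iteratedFDeriv hk).comp (Continuous.prodMk_right v))

theorem contDiff_setIntegral_of_isCompact [MeasurableSpace W] [OpensMeasurableSpace W]
    [SecondCountableTopology W] {μ : Measure W} [IsFiniteMeasureOnCompacts μ] {K : E × W → F}
    {n : ℕ∞} (hK : ContDiff ℝ n K) {s : Set W} (hs : IsCompact s) (hsm : MeasurableSet s) :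
    ContDiff ℝ n fun v => ∫ w in s, K (v, w) ∂μ := by
  refine contDiff_integral_of_dominated (fun w => hK.comp (contDiff_prodMk_left w))
    (fun k hk v => ?_) (fun k hk v => ?_)
  · have hcont := continuous_iteratedFDeriv_prodMk_right hK (by exact_mod_cast hk) v
    exact hcont.aestronglyMeasurable
  · have hcont : Continuous (iteratedFDeriv ℝ k K) :=
      hK.continuous_iteratedFDeriv (by exact_mod_cast hk)
    obtain ⟨C, hC⟩ := hs.exists_bound_of_continuousOn (f := fun w => iteratedFDeriv ℝ k K (v, w))
      (by fun_prop)
    have hnear : ∀ᶠ v' in 𝓝 v, ∀ w ∈ s, ‖iteratedFDeriv ℝ k K (v', w)‖ < C + 1 :=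
      hs.eventually_forall_of_forall_eventually fun w hw =>
        hcont.norm.continuousAt.eventually_lt continuousAt_const (by linarith [hC w hw])
    refine ⟨_, hnear, fun _ => C + 1, integrableOn_const hs.measure_lt_top.ne, ?_⟩
    filter_upwards [ae_restrict_mem hsm] with w hw v' hv'
    exact (norm_iteratedFDeriv_prodMk_right_le hK (by exact_mod_cast hk) v' w).trans (hv' w hw).le

theorem integrable_one_add_norm_pow_mul_schwartz [MeasurableSpace W] [BorelSpace W]
    [SecondCountableTopology W] (μ : Measure W) [μ.HasTemperateGrowth] (a : 𝓢(W, F)) (k : ℕ) :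
    Integrable (fun ξ => (1 + ‖ξ‖) ^ k * ‖a ξ‖) μ := by
  simp_rw [add_comm (1 : ℝ), add_pow, one_pow, mul_one, Finset.sum_mul]
  refine integrable_finsetSum _ fun i _ => ?_
  simpa only [mul_right_comm] using (a.integrable_pow_mul μ i).mul_const (k.choose i : ℝ)

theorem exists_norm_iteratedFDeriv_prodMk_le_of_hasTemperateGrowth {K : E × W → F}
    (hK : K.HasTemperateGrowth) (k : ℕ) (R : ℝ) : ∃ (m : ℕ) (C : ℝ), ∀ v, ‖v‖ ≤ R → ∀ w,
      ‖iteratedFDeriv ℝ k K (v, w)‖ ≤ C * (1 + ‖w‖) ^ m := by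
  obtain ⟨m, C, hC⟩ := hK.2 k
  refine ⟨m, |C| * (1 + R) ^ m, fun v hv w => ?_⟩
  have hR : 0 ≤ R := (norm_nonneg v).trans hv
  have hnorm : 1 + ‖(v, w)‖ ≤ (1 + R) * (1 + ‖w‖) := by
    have : ‖(v, w)‖ ≤ R + ‖w‖ :=
      max_le (hv.trans (by linarith [norm_nonneg w])) (by linarith : ‖w‖ ≤ R + ‖w‖)
    nlinarith [norm_nonneg w]
  calc ‖iteratedFDeriv ℝ k K (v, w)‖ ≤ C * (1 + ‖(v, w)‖) ^ m := hC _
    _ ≤ |C| * ((1 + R) * (1 + ‖w‖)) ^ m := by gcongr; exact le_abs_self C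
    _ = |C| * (1 + R) ^ m * (1 + ‖w‖) ^ m := by rw [mul_pow, mul_assoc]

theorem contDiff_integral_schwartz_smul {𝕜 : Type*} [RCLike 𝕜] [NormedSpace 𝕜 F]
    [SMulCommClass ℝ 𝕜 F] [MeasurableSpace W] [BorelSpace W] [SecondCountableTopology W]
    {μ : Measure W} [μ.HasTemperateGrowth] (a : 𝓢(W, 𝕜)) {K : E × W → F}
    (hK : K.HasTemperateGrowth) : ContDiff ℝ ∞ fun v => ∫ ξ, a ξ • K (v, ξ) ∂μ := by
  have hslice : ∀ ξ, ContDiff ℝ ∞ fun v => K (v, ξ) := fun ξ => hK.1.comp (contDiff_prodMk_left ξ)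
  have hsmul : ∀ (k : ℕ) v ξ, iteratedFDeriv ℝ k (fun v => a ξ • K (v, ξ)) v =
      a ξ • iteratedFDeriv ℝ k (fun v => K (v, ξ)) v := fun k v ξ =>
    iteratedFDeriv_const_smul_apply ((hslice ξ).contDiffAt.of_le (by exact_mod_cast le_top))
  refine contDiff_integral_of_dominated (fun ξ => contDiff_const.smul (hslice ξ))
    (fun k _ v => ?_) (fun k _ v => ?_)
  · simp_rw [hsmul]
    have hcont := continuous_iteratedFDeriv_prodMk_right hK.1 (by exact_mod_cast le_top) v (k := k)
    exact (a.continuous.smul hcont).aestronglyMeasurable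
  · obtain ⟨m, C, hC⟩ := exists_norm_iteratedFDeriv_prodMk_le_of_hasTemperateGrowth hK k (‖v‖ + 1)
    refine ⟨Metric.ball v 1, Metric.ball_mem_nhds v one_pos,
      fun ξ => C * ((1 + ‖ξ‖) ^ m * ‖a ξ‖),
      (integrable_one_add_norm_pow_mul_schwartz μ a m).const_mul C,
      .of_forall fun ξ v' hv' => ?_⟩
    have hbound : ‖iteratedFDeriv ℝ k (fun v => K (v, ξ)) v'‖ ≤ C * (1 + ‖ξ‖) ^ m :=
      (norm_iteratedFDeriv_prodMk_right_le hK.1 (by exact_mod_cast le_top) v' ξ).trans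
        (hC v' (norm_le_norm_add_const_of_dist_le (Metric.mem_ball.1 hv').le) ξ)
    calc _ = ‖iteratedFDeriv ℝ k (fun v => K (v, ξ)) v'‖ * ‖a ξ‖ := by
          rw [hsmul, norm_smul, mul_comm]
      _ ≤ C * (1 + ‖ξ‖) ^ m * ‖a ξ‖ := by gcongr
      _ = _ := mul_assoc ..

end ParametricIntegral

theorem exists_contDiff_sub_eq_smul {V F : Type*} [NormedAddCommGroup V] [NormedSpace ℝ V]
    [NormedAddCommGroup F] [NormedSpace ℝ F] [CompleteSpace F] {h : V → F} (hh : ContDiff ℝ ∞ h)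
    (ℓ : V →L[ℝ] ℝ) (e : V) :
    ∃ p : V → F, ContDiff ℝ ∞ p ∧ ∀ v, h v - h (v - ℓ v • e) = ℓ v • p v := by
  let line : V × ℝ → V := fun q => q.1 - ℓ q.1 • e + q.2 • ℓ q.1 • e
  have hline : ContDiff ℝ ∞ line := by fun_prop
  have hfderiv : ContDiff ℝ ∞ (fderiv ℝ h) := hh.fderiv_right le_rfl
  refine ⟨fun v => ∫ t in Set.Icc (0 : ℝ) 1, fderiv ℝ h (line (v, t)) e,
    contDiff_setIntegral_of_isCompact ((hfderiv.comp hline).clm_apply contDiff_const)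
      isCompact_Icc measurableSet_Icc, fun v => ?_⟩
  have hline_deriv : ∀ t, HasDerivAt (fun t => h (line (v, t)))
      (fderiv ℝ h (line (v, t)) (ℓ v • e)) t := fun t => by
    have hdir : HasDerivAt (fun t => line (v, t)) (ℓ v • e) t := by
      simpa [line] using (hasDerivAt_id t).smul_const (ℓ v • e)
    exact ((hh.differentiable (by simp)) _).hasFDerivAt.comp_hasDerivAt t hdir
  have hcont : Continuous fun t => fderiv ℝ h (line (v, t)) (ℓ v • e) := by
    have := hfderiv.continuous
    have := hline.continuous
    fun_prop
  calc h v - h (v - ℓ v • e) = h (line (v, 1)) - h (line (v, 0)) := by simp [line]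
    _ = ∫ t in (0 : ℝ)..1, fderiv ℝ h (line (v, t)) (ℓ v • e) :=
      (intervalIntegral.integral_eq_sub_of_hasDerivAt (fun t _ => hline_deriv t)
        (hcont.intervalIntegrable 0 1)).symm
    _ = ℓ v • ∫ t in Set.Icc (0 : ℝ) 1, fderiv ℝ h (line (v, t)) e := by
      simp_rw [map_smul]
      rw [intervalIntegral.integral_smul, intervalIntegral.integral_of_le zero_le_one,
        integral_Icc_eq_integral_Ioc]

section CosSqrt

theorem hasDerivAt_comp_sq {f : ℝ → ℝ} {f' x : ℝ} (hf : HasDerivAt f f' (x ^ 2)) :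
    HasDerivAt (fun x => f (x ^ 2)) (f' * (2 * x)) x :=
  HasDerivAt.comp (h := fun x => x ^ 2) x hf (by simpa using hasDerivAt_pow 2 x)

theorem differentiable_tsum_neg_one_pow_mul_pow_div_factorial :
    Differentiable ℂ fun w : ℂ => ∑' n : ℕ, (-1) ^ n * w ^ n / ((2 * n).factorial : ℂ) := by
  intro w
  refine (Complex.differentiableOn_tsum_of_summable_norm (U := Metric.ball 0 (‖w‖ + 1))
    (Real.summable_pow_div_factorial (‖w‖ + 1)) (fun n => by fun_prop) Metric.isOpen_ball
    fun n z hz => ?_).differentiableAt (Metric.isOpen_ball.mem_nhds (by simp))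
  have hz' : ‖z‖ ≤ ‖w‖ + 1 := (mem_ball_zero_iff.1 hz).le
  have hfactorial : (n.factorial : ℝ) ≤ (2 * n).factorial := by
    exact_mod_cast Nat.factorial_le (by omega)
  simp only [norm_div, norm_mul, norm_pow, norm_neg, norm_one, one_pow, one_mul,
    Complex.norm_natCast]
  gcongr

theorem exists_contDiff_comp_sq_eq_cos :
    ∃ c : ℝ → ℝ, ContDiff ℝ ∞ c ∧ ∀ x, c (x ^ 2) = Real.cos x := by
  refine ⟨fun t => (∑' n : ℕ, (-1) ^ n * (t : ℂ) ^ n / ((2 * n).factorial : ℂ)).re, ?_, fun x => ?_⟩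
  · have hentire : ContDiff ℝ ∞ _ :=
      differentiable_tsum_neg_one_pow_mul_pow_div_factorial.contDiff.restrict_scalars ℝ
    exact Complex.reCLM.contDiff.comp (hentire.comp Complex.ofRealCLM.contDiff)
  · rw [← Complex.cos_ofReal_re, ← (Complex.hasSum_cos x).tsum_eq]
    simp only [Complex.ofReal_pow, pow_mul]

variable {c : ℝ → ℝ}

theorem two_mul_mul_deriv_sq_of_comp_sq_eq_cos (hc : Differentiable ℝ c)
    (hcos : ∀ x, c (x ^ 2) = Real.cos x) (x : ℝ) : 2 * x * deriv c (x ^ 2) = -Real.sin x := by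
  rw [mul_comm]
  exact (hasDerivAt_comp_sq (hc (x ^ 2)).hasDerivAt).unique
    (by simpa only [hcos] using Real.hasDerivAt_cos x)

theorem iteratedDeriv_ode_of_comp_sq_eq_cos (hc : ContDiff ℝ ∞ c)
    (hcos : ∀ x, c (x ^ 2) = Real.cos x) (k : ℕ) {t : ℝ} (ht : 0 < t) :
    4 * t * iteratedDeriv (k + 2) c t + (4 * k + 2) * iteratedDeriv (k + 1) c t
      + iteratedDeriv k c t = 0 := by
  have hderiv : ∀ k t, HasDerivAt (iteratedDeriv k c) (iteratedDeriv (k + 1) c t) t := fun k t => by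
    rw [iteratedDeriv_succ]
    exact (hc.differentiable_iteratedDeriv k (by exact_mod_cast WithTop.coe_lt_top _) t).hasDerivAt
  induction k generalizing t with
  | zero =>
    obtain ⟨x, rfl⟩ : ∃ x, t = x ^ 2 := ⟨√t, (Real.sq_sqrt ht.le).symm⟩
    have hsin : ∀ x, 2 * x * iteratedDeriv 1 c (x ^ 2) = -Real.sin x := by
      simpa only [iteratedDeriv_one] using
        two_mul_mul_deriv_sq_of_comp_sq_eq_cos (hc.differentiable (by simp)) hcos
    have hcomp : HasDerivAt (fun x => 2 * x * iteratedDeriv 1 c (x ^ 2))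
        (2 * 1 * iteratedDeriv 1 c (x ^ 2) + 2 * x * (iteratedDeriv 2 c (x ^ 2) * (2 * x))) x :=
      ((hasDerivAt_id x).const_mul 2).mul
        (hasDerivAt_comp_sq (hderiv 1 (x ^ 2)))
    have hsecond := hcomp.unique (by simpa only [hsin] using (Real.hasDerivAt_sin x).fun_neg)
    rw [← hcos] at hsecond
    simp only [iteratedDeriv_zero, Nat.cast_zero, zero_add]
    linear_combination hsecond
  | succ k ih =>
    have hsum : HasDerivAt (fun t => 4 * t * iteratedDeriv (k + 2) c t
          + (4 * k + 2) * iteratedDeriv (k + 1) c t + iteratedDeriv k c t)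
        (4 * 1 * iteratedDeriv (k + 2) c t + 4 * t * iteratedDeriv (k + 3) c t
          + (4 * k + 2) * iteratedDeriv (k + 2) c t + iteratedDeriv (k + 1) c t) t :=
      ((((hasDerivAt_id t).const_mul 4).mul (hderiv (k + 2) t)).add
        ((hderiv (k + 1) t).const_mul _)).add (hderiv k t)
    have hzero := hsum.unique ((hasDerivAt_const t (0 : ℝ)).congr_of_eventuallyEq
      (by filter_upwards [lt_mem_nhds ht] with y hy using ih hy))
    push_cast
    linear_combination hzero

theorem exists_abs_iteratedDeriv_le_of_comp_sq_eq_cos (hc : ContDiff ℝ ∞ c)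
    (hcos : ∀ x, c (x ^ 2) = Real.cos x) (k : ℕ) :
    ∃ B, ∀ t, 1 ≤ t → |iteratedDeriv k c t| ≤ B := by
  induction k using Nat.twoStepInduction with
  | zero =>
    refine ⟨1, fun t ht => ?_⟩
    rw [iteratedDeriv_zero, ← Real.sq_sqrt (zero_le_one.trans ht), hcos]
    exact Real.abs_cos_le_one _
  | one =>
    refine ⟨1, fun t ht => ?_⟩
    have hsqrt : 1 ≤ √t := Real.one_le_sqrt.2 ht
    have hsin := two_mul_mul_deriv_sq_of_comp_sq_eq_cos (hc.differentiable (by simp)) hcos (√t)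
    have habs : 2 * √t * |deriv c t| ≤ 1 := by
      rw [Real.sq_sqrt (zero_le_one.trans ht)] at hsin
      rw [← abs_of_nonneg (by positivity : 0 ≤ 2 * √t), ← abs_mul, hsin, abs_neg]
      exact Real.abs_sin_le_one _
    rw [iteratedDeriv_one]
    nlinarith [abs_nonneg (deriv c t)]
  | more k ih ih' =>
    obtain ⟨B, hB⟩ := ih
    obtain ⟨B', hB'⟩ := ih'
    refine ⟨(4 * k + 2) * B' + B, fun t ht => ?_⟩
    have hode := iteratedDeriv_ode_of_comp_sq_eq_cos hc hcos k (zero_lt_one.trans_le ht)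
    calc |iteratedDeriv (k + 2) c t| ≤ 4 * t * |iteratedDeriv (k + 2) c t| :=
          le_mul_of_one_le_left (abs_nonneg _) (by linarith)
      _ = |4 * t * iteratedDeriv (k + 2) c t| := by
          rw [abs_mul, abs_of_nonneg (by linarith : 0 ≤ 4 * t)]
      _ = |(4 * k + 2) * iteratedDeriv (k + 1) c t + iteratedDeriv k c t| := by
          rw [← abs_neg]
          congr 1
          linarith
      _ ≤ |(4 * k + 2) * iteratedDeriv (k + 1) c t| + |iteratedDeriv k c t| := abs_add_le ..
      _ = (4 * k + 2) * |iteratedDeriv (k + 1) c t| + |iteratedDeriv k c t| := by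
          rw [abs_mul, abs_of_nonneg (by positivity : (0 : ℝ) ≤ 4 * k + 2)]
      _ ≤ (4 * k + 2) * B' + B := by gcongr; exacts [hB' t ht, hB t ht]

theorem hasTemperateGrowth_of_iteratedDeriv_bounded {F : Type*} [NormedAddCommGroup F]
    [NormedSpace ℝ F] {f : ℝ → F} (hf : ContDiff ℝ ∞ f)
    (hbound : ∀ n, ∃ C, ∀ t, ‖iteratedDeriv n f t‖ ≤ C) : f.HasTemperateGrowth := by
  refine ⟨hf, fun n => ?_⟩
  obtain ⟨C, hC⟩ := hbound n
  refine ⟨0, C, fun t => ?_⟩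
  simpa only [norm_iteratedFDeriv_eq_norm_iteratedDeriv, pow_zero, mul_one] using hC t

theorem exists_hasTemperateGrowth_comp_sq_eq_cos :
    ∃ c : ℝ → ℝ, c.HasTemperateGrowth ∧ ∀ x, c (x ^ 2) = Real.cos x := by
  obtain ⟨c, hc, hcos⟩ := exists_contDiff_comp_sq_eq_cos
  -- `c` grows like `cosh √|t|` as `t → -∞`, so it is cut off there.
  let d : ℝ → ℝ := fun t => Real.smoothTransition (t + 1) * c t
  have hd : ContDiff ℝ ∞ d :=
    (Real.smoothTransition.contDiff.comp (contDiff_id.add contDiff_const)).mul hc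
  have hd_left : ∀ t < -1, d =ᶠ[𝓝 t] fun _ => 0 := fun t ht => by
    filter_upwards [gt_mem_nhds ht] with y hy
    simp [d, Real.smoothTransition.zero_of_nonpos (by linarith : y + 1 ≤ 0)]
  have hd_right : ∀ t > 0, d =ᶠ[𝓝 t] c := fun t ht => by
    filter_upwards [lt_mem_nhds ht] with y hy
    simp [d, Real.smoothTransition.one_of_one_le (by linarith : 1 ≤ y + 1)]
  refine ⟨d, hasTemperateGrowth_of_iteratedDeriv_bounded hd fun n => ?_, fun x => ?_⟩
  · obtain ⟨B, hB⟩ := exists_abs_iteratedDeriv_le_of_comp_sq_eq_cos hc hcos n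
    obtain ⟨B', hB'⟩ := (isCompact_Icc (a := (-1 : ℝ)) (b := 1)).exists_bound_of_continuousOn
      (hd.continuous_iteratedDeriv n (by exact_mod_cast le_top)).continuousOn
    refine ⟨max (max B B') 0, fun t => ?_⟩
    rcases lt_or_ge t (-1) with hleft | hleft
    · simp [(hd_left t hleft).iteratedDeriv_eq]
    rcases le_or_gt t 1 with hright | hright
    · exact (hB' t ⟨hleft, hright⟩).trans (le_max_of_le_left (le_max_right ..))
    · rw [(hd_right t (by linarith)).iteratedDeriv_eq]
      exact (hB t hright.le).trans (le_max_of_le_left (le_max_left ..))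
  · simp only [d, hcos]
    rw [Real.smoothTransition.one_of_one_le (by nlinarith), one_mul]

theorem hasTemperateGrowth_cexp_ofReal_mul_I :
    (fun t : ℝ => Complex.exp (t * Complex.I)).HasTemperateGrowth := by
  have hcos : Real.cos.HasTemperateGrowth := hasTemperateGrowth_of_iteratedDeriv_bounded
    Real.contDiff_cos fun n => ⟨1, Real.abs_iteratedDeriv_cos_le_one n⟩
  have hsin : Real.sin.HasTemperateGrowth := hasTemperateGrowth_of_iteratedDeriv_bounded
    Real.contDiff_sin fun n => ⟨1, Real.abs_iteratedDeriv_sin_le_one n⟩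
  simp_rw [Complex.exp_mul_I, ← Complex.ofReal_cos, ← Complex.ofReal_sin]
  exact (Complex.hasTemperateGrowth_ofReal.comp hcos).add
    ((Complex.hasTemperateGrowth_ofReal.comp hsin).mul (.const _))

theorem hasTemperateGrowth_finset_prod {ι E R : Type*} [NormedAddCommGroup E] [NormedSpace ℝ E]
    [NormedCommRing R] [NormedAlgebra ℝ R] {f : ι → E → R} {s : Finset ι}
    (hf : ∀ i ∈ s, (f i).HasTemperateGrowth) : (fun x => ∏ i ∈ s, f i x).HasTemperateGrowth := by
  classical
  induction s using Finset.induction with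
  | empty => simpa only [Finset.prod_empty] using .const 1
  | insert i s hi ih =>
    simp_rw [Finset.prod_insert hi]
    exact (hf i (s.mem_insert_self i)).mul (ih fun j hj => hf j (Finset.mem_insert_of_mem hj))

end CosSqrt

open scoped FourierTransform RealInnerProductSpace in
theorem exists_schwartz_forall_eq_integral_cexp {V : Type*} [NormedAddCommGroup V]
    [NormedSpace ℝ V] [FiniteDimensional ℝ V] {f : V → ℂ} (hf : ContDiff ℝ ∞ f)
    (hsupp : HasCompactSupport f) :
    ∃ (a : 𝓢(EuclideanSpace ℝ (Fin (Module.finrank ℝ V)), ℂ))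
      (L : EuclideanSpace ℝ (Fin (Module.finrank ℝ V)) →L[ℝ] V →L[ℝ] ℝ),
      ∀ v, f v = ∫ ξ, a ξ • Complex.exp (L ξ v * Complex.I) := by
  let e := toEuclidean (E := V)
  let φ : 𝓢(EuclideanSpace ℝ (Fin (Module.finrank ℝ V)), ℂ) :=
    (hsupp.comp_homeomorph e.symm.toHomeomorph).toSchwartzMap (hf.comp e.symm.contDiff)
  let L := (2 * Real.pi) •
    ((ContinuousLinearMap.compL ℝ V _ ℝ).flip e.toContinuousLinearMap).comp (innerSL ℝ)
  refine ⟨𝓕 φ, L, fun v => ?_⟩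
  have hL : ∀ ξ, L ξ v = 2 * Real.pi * ⟪ξ, e v⟫ := fun ξ => rfl
  calc f v = φ (e v) := by simp [φ]
    _ = (𝓕⁻ (𝓕 φ)) (e v) := by simp
    _ = ∫ ξ, 𝓕 φ ξ • Complex.exp (L ξ v * Complex.I) := by
      rw [SchwartzMap.fourierInv_coe, Real.fourierInv_eq']
      simp only [smul_eq_mul, hL, mul_comm]

section Even

variable {ι E : Type*} [Fintype ι] [NormedAddCommGroup E] [NormedSpace ℝ E]

theorem sum_signs_cexp_eq_prod_cos [DecidableEq ι] (φ : ι → ℝ) :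
    ∑ σ : ι → ℤˣ, Complex.exp ((∑ i, σ i • φ i : ℝ) * Complex.I) =
      2 ^ Fintype.card ι * ∏ i, (Real.cos (φ i) : ℂ) := by
  have hpair : ∀ t : ℝ, ∑ u : ℤˣ, Complex.exp ((u • t : ℝ) * Complex.I) = 2 * (Real.cos t : ℂ) := by
    intro t
    rw [UnitsInt.univ, Finset.sum_pair (by decide)]
    simp [Complex.ofReal_cos, Complex.cos]
    ring
  simp_rw [Complex.ofReal_sum, Finset.sum_mul, Complex.exp_sum]
  rw [← Fintype.prod_sum fun i (u : ℤˣ) => Complex.exp ((u • φ i : ℝ) * Complex.I)]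
  simp_rw [hpair, Finset.prod_mul_distrib, Finset.prod_const, Finset.card_univ]

theorem sum_signs_cexp_apply [DecidableEq ι] (L : (ι → ℝ) × E →L[ℝ] ℝ) (x : ι → ℝ) (w : E) :
    ∑ σ : ι → ℤˣ, Complex.exp (L (σ • x, w) * Complex.I) =
      2 ^ Fintype.card ι * ((∏ i, (Real.cos (x i * L (Pi.single i 1, 0)) : ℂ)) *
        Complex.exp (L (0, w) * Complex.I)) := by
  have hsplit : ∀ σ : ι → ℤˣ, L (σ • x, w) =
      ∑ i, σ i • (x i * L (Pi.single i 1, 0)) + L (0, w) := fun σ => by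
    have hinl : L (σ • x, 0) = ∑ i, (σ • x) i * L (Pi.single i 1, 0) := by
      conv_lhs => rw [← ContinuousLinearMap.inl_apply (R := ℝ), pi_eq_sum_univ' (σ • x)]
      simp only [map_sum, map_smul, smul_eq_mul, ContinuousLinearMap.inl_apply]
    rw [← zero_add w, ← add_zero (σ • x), ← Prod.mk_add_mk, map_add, hinl, zero_add]
    simp only [Pi.smul_apply', smul_mul_assoc]
  simp_rw [hsplit, Complex.ofReal_add, add_mul, Complex.exp_add, ← Finset.sum_mul]
  rw [sum_signs_cexp_eq_prod_cos, mul_assoc]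

theorem hasTemperateGrowth_prod_comp_mul_sq_mul_cexp {W : Type*} [NormedAddCommGroup W]
    [NormedSpace ℝ W] [DecidableEq ι] {c : ℝ → ℝ} (hc : c.HasTemperateGrowth)
    (L : W →L[ℝ] (ι → ℝ) × E →L[ℝ] ℝ) :
    (fun q : ((ι → ℝ) × E) × W =>
      (∏ i, (c (q.1.1 i * L q.2 (Pi.single i 1, 0) ^ 2) : ℂ)) *
        Complex.exp (L q.2 (0, q.1.2) * Complex.I)).HasTemperateGrowth := by
  have hcoord : ∀ i, (fun q : ((ι → ℝ) × E) × W => q.1.1 i).HasTemperateGrowth := fun i =>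
    (((ContinuousLinearMap.proj i).comp (.fst ℝ (ι → ℝ) E)).comp
      (.fst ℝ ((ι → ℝ) × E) W)).hasTemperateGrowth
  have hfreq : ∀ i, (fun q : ((ι → ℝ) × E) × W => L q.2 (Pi.single i 1, 0)).HasTemperateGrowth :=
    fun i => ((L.flip (Pi.single i 1, 0)).comp (.snd ℝ ((ι → ℝ) × E) W)).hasTemperateGrowth
  have hphase : (fun q : ((ι → ℝ) × E) × W => L q.2 (0, q.1.2)).HasTemperateGrowth :=
    L.bilinear_hasTemperateGrowth (ContinuousLinearMap.snd ℝ ((ι → ℝ) × E) W).hasTemperateGrowth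
      (((ContinuousLinearMap.inr ℝ (ι → ℝ) E).comp (.snd ℝ (ι → ℝ) E)).comp
        (.fst ℝ ((ι → ℝ) × E) W)).hasTemperateGrowth
  refine .mul (hasTemperateGrowth_finset_prod fun i _ => ?_)
    (hasTemperateGrowth_cexp_ofReal_mul_I.comp hphase)
  exact Complex.hasTemperateGrowth_ofReal.comp (hc.comp ((hcoord i).mul ((hfreq i).pow 2)))

theorem eq_integral_prod_cos_mul_cexp_of_signs_smul_eq [DecidableEq ι] {W : Type*}
    [NormedAddCommGroup W] [NormedSpace ℝ W] [MeasurableSpace W] [BorelSpace W]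
    [SecondCountableTopology W] {μ : Measure W} [μ.HasTemperateGrowth] {f : (ι → ℝ) × E → ℂ}
    (hsymm : ∀ (σ : ι → ℤˣ) x w, f (σ • x, w) = f (x, w)) (a : 𝓢(W, ℂ))
    (L : W →L[ℝ] (ι → ℝ) × E →L[ℝ] ℝ)
    (hfourier : ∀ v, f v = ∫ ξ, a ξ • Complex.exp (L ξ v * Complex.I) ∂μ) (x : ι → ℝ) (w : E) :
    f (x, w) = ∫ ξ, a ξ • ((∏ i, (Real.cos (x i * L ξ (Pi.single i 1, 0)) : ℂ)) *
      Complex.exp (L ξ (0, w) * Complex.I)) ∂μ := by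
  have hint : ∀ v, Integrable (fun ξ => a ξ • Complex.exp (L ξ v * Complex.I)) μ := fun v => by
    have hcont : Continuous fun ξ => Complex.exp (L ξ v * Complex.I) := by fun_prop
    exact a.integrable.smul_bdd 1 hcont.aestronglyMeasurable
      (.of_forall fun ξ => (Complex.norm_exp_ofReal_mul_I _).le)
  refine mul_left_cancel₀ (pow_ne_zero (Fintype.card ι) (two_ne_zero' ℂ)) ?_
  calc 2 ^ Fintype.card ι * f (x, w) = ∑ σ : ι → ℤˣ, f (σ • x, w) := by simp [hsymm]
    _ = ∫ ξ, ∑ σ : ι → ℤˣ, a ξ • Complex.exp (L ξ (σ • x, w) * Complex.I) ∂μ := by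
      simp_rw [hfourier]
      exact (integral_finsetSum _ fun σ _ => hint (σ • x, w)).symm
    _ = _ := by
      rw [← integral_const_mul]
      simp_rw [← Finset.smul_sum, sum_signs_cexp_apply, smul_eq_mul, mul_left_comm]

theorem exists_contDiff_comp_sq_eq_of_hasCompactSupport [FiniteDimensional ℝ E]
    {f : (ι → ℝ) × E → ℝ} (hf : ContDiff ℝ ∞ f) (hsupp : HasCompactSupport f)
    (hsymm : ∀ (σ : ι → ℤˣ) x w, f (σ • x, w) = f (x, w)) :
    ∃ h : (ι → ℝ) × E → ℝ, ContDiff ℝ ∞ h ∧ ∀ x w, f (x, w) = h (x ^ 2, w) := by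
  classical
  obtain ⟨a, L, hfourier⟩ := exists_schwartz_forall_eq_integral_cexp
    (Complex.ofRealCLM.contDiff.comp hf) (hsupp.comp_left Complex.ofReal_zero)
  obtain ⟨c, hc, hcos⟩ := exists_hasTemperateGrowth_comp_sq_eq_cos
  have hcomplex := eq_integral_prod_cos_mul_cexp_of_signs_smul_eq
    (fun σ x w => congrArg Complex.ofReal (hsymm σ x w)) a L hfourier
  refine ⟨_, Complex.reCLM.contDiff.comp <| contDiff_integral_schwartz_smul (μ := volume) a
    (hasTemperateGrowth_prod_comp_mul_sq_mul_cexp hc L), fun x w => ?_⟩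
  simp only [comp_apply, Pi.pow_apply, ← mul_pow, hcos]
  exact congrArg Complex.re (hcomplex x w)

theorem signs_smul_sq {ι : Type*} (σ : ι → ℤˣ) (x : ι → ℝ) : (σ • x) ^ 2 = x ^ 2 := by
  ext i
  simp [smul_pow]

theorem isProperMap_sq_fst {ι E : Type*} [TopologicalSpace E] :
    IsProperMap fun v : (ι → ℝ) × E => (v.1 ^ 2, v.2) := by
  have hsq : IsProperMap fun t : ℝ => t ^ 2 := by
    have heval : (fun t : ℝ => t ^ 2) = fun t => (Polynomial.X ^ 2 : Polynomial ℝ).eval t := by simp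
    rw [heval]
    exact (Polynomial.X ^ 2 : Polynomial ℝ).isProperMap_eval (by simp)
  exact (IsProperMap.pi_map fun _ => hsq).prodMap isProperMap_id

theorem hasCompactSupport_comp_of_isProperMap {X Y M : Type*} [TopologicalSpace X]
    [TopologicalSpace Y] [Zero M] {f : Y → M} (hf : HasCompactSupport f) {g : X → Y}
    (hg : IsProperMap g) : HasCompactSupport (f ∘ g) :=
  (hg.isCompact_preimage hf).of_isClosed_subset isClosed_closure
    (tsupport_comp_subset_preimage f hg.continuous)

open scoped Manifold in
theorem exists_contDiff_comp_sq_eq [FiniteDimensional ℝ E]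
    {f : (ι → ℝ) × E → ℝ} (hf : ContDiff ℝ ∞ f)
    (hsymm : ∀ (σ : ι → ℤˣ) x w, f (σ • x, w) = f (x, w)) :
    ∃ h : (ι → ℝ) × E → ℝ, ContDiff ℝ ∞ h ∧ ∀ x w, f (x, w) = h (x ^ 2, w) := by
  let values : (ι → ℝ) × E → Set ℝ := fun v => {t | ∀ x, x ^ 2 = v.1 → f (x, v.2) = t}
  have hconvex : ∀ v, Convex ℝ (values v) := fun v t ht s hs a b _ _ hab x hx => by
    rw [← ht x hx, ← hs x hx, ← add_smul, hab, one_smul]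
  have hlocal : ∀ v, ∃ U ∈ 𝓝 v, ∃ h : (ι → ℝ) × E → ℝ,
      ContMDiffOn 𝓘(ℝ, (ι → ℝ) × E) 𝓘(ℝ) ∞ h U ∧
      ∀ v' ∈ U, h v' ∈ values v' := fun v => by
    let θ : ContDiffBump v := default
    have hcutoff : ContDiff ℝ ∞ fun v : (ι → ℝ) × E => θ (v.1 ^ 2, v.2) * f v :=
      (θ.contDiff.comp (by fun_prop)).mul hf
    have hsupp : HasCompactSupport fun v : (ι → ℝ) × E => θ (v.1 ^ 2, v.2) * f v :=
      (hasCompactSupport_comp_of_isProperMap θ.hasCompactSupport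
        isProperMap_sq_fst).mul_right
    obtain ⟨h, hh, heq⟩ := exists_contDiff_comp_sq_eq_of_hasCompactSupport hcutoff hsupp
      fun σ x w => by rw [signs_smul_sq, hsymm]
    refine ⟨Metric.closedBall v θ.rIn, Metric.closedBall_mem_nhds v θ.rIn_pos, h,
      hh.contMDiff.contMDiffOn, fun ⟨t, w⟩ hv x hx => ?_⟩
    obtain rfl : x ^ 2 = t := hx
    rw [← heq, θ.one_of_mem_closedBall hv, one_mul]
  obtain ⟨h, hvalues⟩ := exists_contMDiffMap_forall_mem_convex_of_local 𝓘(ℝ, (ι → ℝ) × E)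
    hconvex hlocal
  exact ⟨h, h.contMDiff.contDiff, fun x w => hvalues (x ^ 2, w) x rfl⟩

theorem sq_sub_smul_single_eq_update_sq {ι R : Type*} [DecidableEq ι] [CommRing R] (x : ι → R)
    (i : ι) : x ^ 2 - x i ^ 2 • Pi.single i 1 = update x i 0 ^ 2 := by
  ext j
  rcases eq_or_ne j i with rfl | hj
  · simp
  · simp [hj]

theorem exists_contDiff_eq_comp_sq_mul_apply [FiniteDimensional ℝ E] {f : (ι → ℝ) × E → ℝ}
    (hf : ContDiff ℝ ∞ f) (i : ι) (hodd : ∀ (σ : ι → ℤˣ) x w, f (σ • x, w) = σ i • f (x, w)) :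
    ∃ p : (ι → ℝ) × E → ℝ, ContDiff ℝ ∞ p ∧ ∀ x w, f (x, w) = p (x ^ 2, w) * x i := by
  classical
  obtain ⟨h, hh, heven⟩ := exists_contDiff_comp_sq_eq (f := fun v => v.1 i * f v) (by fun_prop)
    fun σ x w => by simp [hodd, smul_mul_smul_comm]
  obtain ⟨p, hp, hdiv⟩ := exists_contDiff_sub_eq_smul hh
    ((ContinuousLinearMap.proj i).comp (.fst ℝ (ι → ℝ) E)) (Pi.single i 1, 0)
  refine ⟨p, hp, fun x w => ?_⟩
  rcases eq_or_ne (x i) 0 with hxi | hxi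
  · let reflect : ι → ℤˣ := update 1 i (-1)
    have hreflect : reflect • x = x := by
      ext j
      rcases eq_or_ne j i with rfl | hj
      · simp [hxi]
      · simp [reflect, hj]
    have hneg : f (x, w) = -f (x, w) := by simpa [hreflect, reflect] using hodd reflect x w
    rw [hxi, mul_zero, self_eq_neg.1 hneg]
  · have hface : (x ^ 2, w) - x i ^ 2 • ((Pi.single i 1, 0) : (ι → ℝ) × E) =
        (update x i 0 ^ 2, w) := by
      simp [sq_sub_smul_single_eq_update_sq]
    have hsq : x i * f (x, w) = x i ^ 2 * p (x ^ 2, w) :=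
      calc x i * f (x, w) = h (x ^ 2, w) - h (update x i 0 ^ 2, w) := by simp [← heven]
        _ = h (x ^ 2, w) - h ((x ^ 2, w) - x i ^ 2 • (Pi.single i 1, 0)) := by rw [hface]
        _ = x i ^ 2 * p (x ^ 2, w) := hdiv (x ^ 2, w)
    refine mul_left_cancel₀ hxi ?_
    linear_combination hsq

theorem hasFDerivAt_comp_sq_mul_fst {A : Type*} [NormedCommRing A] [NormedAlgebra ℝ A]
    {p : A × E → A} (hp : Differentiable ℝ p) (w : E) :
    HasFDerivAt (fun v : A × E => p (v.1 ^ 2, v.2) * v.1)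
      (p (0, w) • ContinuousLinearMap.fst ℝ A E) (0, w) := by
  have hcomp : DifferentiableAt ℝ (fun v : A × E => p (v.1 ^ 2, v.2)) (0, w) := by fun_prop
  refine (hcomp.hasFDerivAt.fun_mul hasFDerivAt_fst).congr_fderiv ?_
  ext <;> simp

theorem stmt0_general [FiniteDimensional ℝ E] {g : (ι → ℝ) × E → ι → ℝ} (hg : ContDiff ℝ ∞ g)
    (hequiv : ∀ (σ : ι → ℤˣ) x w, g (σ • x, w) = σ • g (x, w)) :
    ∃ p : (ι → ℝ) × E → ι → ℝ, ContDiff ℝ ∞ p ∧ (∀ x w, g (x, w) = p (x ^ 2, w) * x) ∧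
      ∀ w, fderiv ℝ g (0, w) = 0 → p (0, w) = 0 := by
  choose p hp hgp using fun i => exists_contDiff_eq_comp_sq_mul_apply (contDiff_pi.1 hg i) i
    fun σ x w => congrFun (hequiv σ x w) i
  have hp' : ContDiff ℝ ∞ fun v i => p i v := contDiff_pi.2 hp
  have hgp' : ∀ x w, g (x, w) = (fun i => p i (x ^ 2, w)) * x := fun x w =>
    funext fun i => hgp i x w
  refine ⟨fun v i => p i v, hp', hgp', fun w hw => ?_⟩
  have hderiv := hasFDerivAt_comp_sq_mul_fst (hp'.differentiable (by simp)) w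
  rw [← funext fun v : (ι → ℝ) × E => hgp' v.1 v.2] at hderiv
  simpa using DFunLike.congr_fun (hderiv.fderiv.symm.trans hw) (1, 0)

end Even

section VectorForm

/-- A map in three state variables and one parameter, with the state variables and the components
of its values indexed by `Fin 3`. -/
def vectorForm (g : ℝ → ℝ → ℝ → ℝ → ℝ × ℝ × ℝ) (v : (Fin 3 → ℝ) × ℝ) : Fin 3 → ℝ :=
  ![(g (v.1 0) (v.1 1) (v.1 2) v.2).1, (g (v.1 0) (v.1 1) (v.1 2) v.2).2.1,
    (g (v.1 0) (v.1 1) (v.1 2) v.2).2.2]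

variable {g : ℝ → ℝ → ℝ → ℝ → ℝ × ℝ × ℝ}

theorem contDiff_vectorForm (hg : Smooth4V g) : ContDiff ℝ ∞ (vectorForm g) := by
  have hcomp : ContDiff ℝ ∞ fun v : (Fin 3 → ℝ) × ℝ => g (v.1 0) (v.1 1) (v.1 2) v.2 :=
    ContDiff.comp hg (f := fun v : (Fin 3 → ℝ) × ℝ => (v.1 0, v.1 1, v.1 2, v.2)) (by fun_prop)
  refine contDiff_pi.2 fun i => ?_
  fin_cases i
  exacts [hcomp.fst, hcomp.snd.fst, hcomp.snd.snd]

theorem fderiv_vectorForm_eq_zero (hg : Smooth4V g)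
    (hd : fderiv ℝ (fun v : ℝ × ℝ × ℝ × ℝ => g v.1 v.2.1 v.2.2.1 v.2.2.2) (0, 0, 0, 0) = 0) :
    fderiv ℝ (vectorForm g) (0, 0) = 0 := by
  have hderiv : HasFDerivAt (fun v : ℝ × ℝ × ℝ × ℝ => g v.1 v.2.1 v.2.2.1 v.2.2.2) 0
      (0, 0, 0, 0) := hd ▸ (ContDiff.differentiable hg (by simp) _).hasFDerivAt
  have hstate : DifferentiableAt ℝ (fun v : (Fin 3 → ℝ) × ℝ => (v.1 0, v.1 1, v.1 2, v.2))
      (0, 0) := by fun_prop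
  have hcomp : HasFDerivAt (fun v : (Fin 3 → ℝ) × ℝ => g (v.1 0) (v.1 1) (v.1 2) v.2)
      (0 : _ →L[ℝ] ℝ × ℝ × ℝ) (0, 0) := by
    simpa only [ContinuousLinearMap.zero_comp] using!
      hderiv.comp ((0, 0) : (Fin 3 → ℝ) × ℝ) hstate.hasFDerivAt
  refine HasFDerivAt.fderiv (hasFDerivAt_pi'.2 fun i => ?_)
  rw [ContinuousLinearMap.comp_zero]
  fin_cases i
  · simpa using! hcomp.fst
  · simpa using! hcomp.snd.fst
  · simpa using! hcomp.snd.snd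

theorem vectorForm_signs_smul
    (hg : ∀ κ ζ ξ : ℝ, (κ = 1 ∨ κ = -1) → (ζ = 1 ∨ ζ = -1) → (ξ = 1 ∨ ξ = -1) →
      ∀ x y z lam : ℝ, g (κ * x) (ζ * y) (ξ * z) lam =
        (κ * (g x y z lam).1, ζ * (g x y z lam).2.1, ξ * (g x y z lam).2.2))
    (σ : Fin 3 → ℤˣ) (x : Fin 3 → ℝ) (lam : ℝ) :
    vectorForm g (σ • x, lam) = σ • vectorForm g (x, lam) := by
  have hsign : ∀ u : ℤˣ, ((u : ℤ) : ℝ) = 1 ∨ ((u : ℤ) : ℝ) = -1 := fun u => by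
    rcases Int.units_eq_one_or u with rfl | rfl <;> simp
  ext i
  fin_cases i <;>
    simp [vectorForm, Units.smul_def, hg _ _ _ (hsign (σ 0)) (hsign (σ 1)) (hsign (σ 2))]

theorem smooth4_comp_vec {p : (Fin 3 → ℝ) × ℝ → Fin 3 → ℝ} (hp : ContDiff ℝ ∞ p) (i : Fin 3) :
    Smooth4 fun a b c lam => p (![a, b, c], lam) i := by
  have hvec : ContDiff ℝ ∞ fun v : ℝ × ℝ × ℝ × ℝ => ![v.1, v.2.1, v.2.2.1] :=
    contDiff_pi.2 fun j => by
      fin_cases j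
      exacts [contDiff_fst, contDiff_snd.fst, contDiff_snd.snd.fst]
  exact (contDiff_apply ℝ ℝ i).comp (hp.comp (hvec.prodMk (by fun_prop)))

end VectorForm

/-- a smooth bifurcation problem `g` in three state variables
commuting with the action of `Z2 × Z2 × Z2` has the normal form
`g(x,y,z,λ) = (p(x²,y²,z²,λ)x, q(x²,y²,z²,λ)y, r(x²,y²,z²,λ)z)` with
`p`, `q`, `r` smooth and vanishing at the origin. -/
theorem stmt0 (g : ℝ → ℝ → ℝ → ℝ → ℝ × ℝ × ℝ)
    (hsmooth : Smooth4V g)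
    (h0 : g 0 0 0 0 = 0)
    (hd0 : fderiv ℝ (fun v : ℝ × ℝ × ℝ × ℝ => g v.1 v.2.1 v.2.2.1 v.2.2.2)
      (0, 0, 0, 0) = 0)
    (hequiv : ∀ κ ζ ξ : ℝ, (κ = 1 ∨ κ = -1) → (ζ = 1 ∨ ζ = -1) → (ξ = 1 ∨ ξ = -1) →
      ∀ x y z lam : ℝ,
        g (κ * x) (ζ * y) (ξ * z) lam =
          (κ * (g x y z lam).1, ζ * (g x y z lam).2.1, ξ * (g x y z lam).2.2)) :
    ∃ p q r : ℝ → ℝ → ℝ → ℝ → ℝ,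
      Smooth4 p ∧ Smooth4 q ∧ Smooth4 r ∧
      (∀ x y z lam : ℝ,
        g x y z lam =
          (p (x ^ 2) (y ^ 2) (z ^ 2) lam * x,
           q (x ^ 2) (y ^ 2) (z ^ 2) lam * y,
           r (x ^ 2) (y ^ 2) (z ^ 2) lam * z)) ∧
      p 0 0 0 0 = 0 ∧ q 0 0 0 0 = 0 ∧ r 0 0 0 0 = 0 := by
  obtain ⟨p, hp, hgp, hp0⟩ :=
    stmt0_general (contDiff_vectorForm hsmooth) (vectorForm_signs_smul hequiv)
  have hzero : p (![0, 0, 0], 0) = 0 := by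
    rw [show ![0, 0, 0] = (0 : Fin 3 → ℝ) by simp]
    exact hp0 0 (fderiv_vectorForm_eq_zero hsmooth hd0)
  refine ⟨fun a b c lam => p (![a, b, c], lam) 0, fun a b c lam => p (![a, b, c], lam) 1,
    fun a b c lam => p (![a, b, c], lam) 2, smooth4_comp_vec hp 0, smooth4_comp_vec hp 1,
    smooth4_comp_vec hp 2, fun x y z lam => ?_, congrFun hzero 0, congrFun hzero 1,
    congrFun hzero 2⟩
  have hvec := hgp ![x, y, z] lam
  rw [show ![x, y, z] ^ 2 = ![x ^ 2, y ^ 2, z ^ 2] by ext i; fin_cases i <;> rfl] at hvec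
  exact Prod.ext (congrFun hvec 0) (Prod.ext (congrFun hvec 1) (congrFun hvec 2))
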